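/- arXiv:0908.1976 — 2 statements merged into one kernel-verified Lean document; each statement's English description precedes it below -/
import Mathlib

section
/- Let θ ∈ W be an involution with imaginary roots Δ_i = {α ∈ Δ : θα = α}, and let φ ∈ ℝⁿ be regular. Set ρ_i(φ) = (1/2)·∑_{α ∈ Δ_i, ⟪α,φ⟫ > 0} α. Suppose α ∈ Δ is complex for θ (θα ≠ ±α). If α is short, then ρ_i(φ) − ρ_i(s_α φ) lies in the ℤ-span of the long roots of Δ. If α is long, then there exist c ∈ {0, 1} and a short root γ ∈ Δ such that ρ_i(φ) − ρ_i(s_α φ) − cγ lies in the ℤ-span of the long roots of Δ. -/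
open scoped RealInnerProductSpace

noncomputable section

/-- Euclidean space `ℝⁿ`. -/
abbrev EucB (n : ℕ) := EuclideanSpace ℝ (Fin n)

/-- The `i`-th standard basis vector of `ℝⁿ`. -/
def eB (n : ℕ) (i : Fin n) : EucB n := EuclideanSpace.single i (1 : ℝ)

/-- The root system `Δ` of type `Bₙ`:
`{±eᵢ ± eⱼ : i < j} ∪ {±eᵢ}`. -/
def DeltaB (n : ℕ) : Set (EucB n) :=
  {v | (∃ i j : Fin n, i < j ∧
          (v = eB n i + eB n j ∨ v = eB n i - eB n j ∨
           v = -eB n i + eB n j ∨ v = -eB n i - eB n j)) ∨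
        ∃ i : Fin n, v = eB n i ∨ v = -eB n i}

/-- The positive system `Δ⁺ = {eᵢ ± eⱼ : i < j} ∪ {eᵢ}`. -/
def DeltaBpos (n : ℕ) : Set (EucB n) :=
  {v | (∃ i j : Fin n, i < j ∧ (v = eB n i + eB n j ∨ v = eB n i - eB n j)) ∨
        ∃ i : Fin n, v = eB n i}

/-- The coroot `α∨ = 2α/⟪α,α⟫`. -/
def corootB (n : ℕ) (α : EucB n) : EucB n := (2 / ⟪α, α⟫) • α

/-- The linear functional `x ↦ ⟪x, α∨⟫`. -/
def corootForm (n : ℕ) (α : EucB n) : Module.Dual ℝ (EucB n) where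
  toFun x := ⟪x, corootB n α⟫
  map_add' x y := inner_add_left _ _ _
  map_smul' c x := by simpa using real_inner_smul_left x (corootB n α) c

/-- The reflection `s_α(x) = x − ⟪x, α∨⟫ α` as a linear automorphism of `ℝⁿ`
(for `α` a root, the branch condition `⟪α, α∨⟫ = 2` holds). -/
def sReflB (n : ℕ) (α : EucB n) : EucB n ≃ₗ[ℝ] EucB n :=
  if h : corootForm n α α = 2 then Module.reflection h else LinearEquiv.refl ℝ (EucB n)

/-- The Weyl group `W(Bₙ)`, the subgroup of linear automorphisms of `ℝⁿ` generated by the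
reflections in the roots of `Δ`. -/
def WeylB (n : ℕ) : Subgroup (EucB n ≃ₗ[ℝ] EucB n) :=
  Subgroup.closure {g | ∃ α ∈ DeltaB n, g = sReflB n α}


/-- `ρ_i(φ)`: half the sum of the imaginary roots of `θ` that are positive with
respect to `φ`. -/
def rhoI (n : ℕ) (θ : EucB n ≃ₗ[ℝ] EucB n) (φ : EucB n) : EucB n :=
  (1 / 2 : ℝ) • ∑ᶠ α ∈ {α | α ∈ DeltaB n ∧ θ α = α ∧ 0 < ⟪α, φ⟫}, α

/-- The set of long roots of `Δ` (those of squared length `2`). -/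
def LongB (n : ℕ) : Set (EucB n) := {α | α ∈ DeltaB n ∧ ⟪α, α⟫ = (2 : ℝ)}

theorem inner_eB (n : ℕ) (x : EucB n) (i : Fin n) : ⟪x, eB n i⟫ = x i := by
  simp [eB, EuclideanSpace.inner_single_right]

theorem inner_eB' (n : ℕ) (x : EucB n) (i : Fin n) : ⟪eB n i, x⟫ = x i := by
  simp [eB, EuclideanSpace.inner_single_left]

theorem eB_apply (n : ℕ) (i j : Fin n) : eB n i j = if j = i then 1 else 0 := by
  simp [eB]

theorem DeltaB_finite (n : ℕ) : (DeltaB n).Finite := by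
  have h : DeltaB n ⊆ (Set.range fun p : Fin n × Fin n => eB n p.1 + eB n p.2) ∪
      (Set.range fun p : Fin n × Fin n => eB n p.1 - eB n p.2) ∪
      (Set.range fun p : Fin n × Fin n => -eB n p.1 + eB n p.2) ∪
      (Set.range fun p : Fin n × Fin n => -eB n p.1 - eB n p.2) ∪
      (Set.range fun p : Fin n => eB n p) ∪ (Set.range fun p : Fin n => -eB n p) := by
    rintro v (⟨i, j, -, h | h | h | h⟩ | ⟨i, h | h⟩)
    · exact Or.inl <| Or.inl <| Or.inl <| Or.inl <| Or.inl ⟨(i, j), h.symm⟩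
    · exact Or.inl <| Or.inl <| Or.inl <| Or.inl <| Or.inr ⟨(i, j), h.symm⟩
    · exact Or.inl <| Or.inl <| Or.inl <| Or.inr ⟨(i, j), h.symm⟩
    · exact Or.inl <| Or.inl <| Or.inr ⟨(i, j), h.symm⟩
    · exact Or.inl <| Or.inr ⟨i, h.symm⟩
    · exact Or.inr ⟨i, h.symm⟩
  refine Set.Finite.subset ?_ h
  simp only [Set.finite_union, Set.finite_range, and_self]

theorem DeltaB_neg (n : ℕ) {v : EucB n} (hv : v ∈ DeltaB n) : -v ∈ DeltaB n := by
  rcases hv with (⟨i, j, hij, h | h | h | h⟩ | ⟨i, h | h⟩)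
  · exact Or.inl ⟨i, j, hij, Or.inr <| Or.inr <| Or.inr <| by rw [h]; abel⟩
  · exact Or.inl ⟨i, j, hij, Or.inr <| Or.inr <| Or.inl <| by rw [h]; abel⟩
  · exact Or.inl ⟨i, j, hij, Or.inr <| Or.inl <| by rw [h]; abel⟩
  · exact Or.inl ⟨i, j, hij, Or.inl <| by rw [h]; abel⟩
  · exact Or.inr ⟨i, Or.inr <| by rw [h]⟩
  · exact Or.inr ⟨i, Or.inl <| by rw [h]; abel⟩

/-- Two-term roots have squared length two. -/
theorem DeltaB_cases (n : ℕ) {v : EucB n} (hv : v ∈ DeltaB n) :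
    ((∃ i j : Fin n, i ≠ j ∧ ∃ a b : ℝ, (a = 1 ∨ a = -1) ∧ (b = 1 ∨ b = -1) ∧
      v = a • eB n i + b • eB n j) ∧ ⟪v, v⟫ = (2 : ℝ)) ∨
    ((∃ i : Fin n, v = eB n i ∨ v = -eB n i) ∧ ⟪v, v⟫ = (1 : ℝ)) := by
  rcases hv with (⟨i, j, hij, h⟩ | ⟨i, h⟩)
  · left
    have h2 : ∃ i j : Fin n, i ≠ j ∧ ∃ a b : ℝ, (a = 1 ∨ a = -1) ∧ (b = 1 ∨ b = -1) ∧
        v = a • eB n i + b • eB n j := by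
      rcases h with h | h | h | h
      · exact ⟨i, j, hij.ne, 1, 1, by simp, by simp, by rw [h]; module⟩
      · exact ⟨i, j, hij.ne, 1, -1, by simp, by simp, by rw [h]; module⟩
      · exact ⟨i, j, hij.ne, -1, 1, by simp, by simp, by rw [h]; module⟩
      · exact ⟨i, j, hij.ne, -1, -1, by simp, by simp, by rw [h]; module⟩
    refine ⟨h2, ?_⟩
    obtain ⟨i, j, hne, a, b, ha, hb, rfl⟩ := h2
    simp only [inner_add_left, inner_add_right, real_inner_smul_left, real_inner_smul_right,
      inner_eB, eB_apply, hne, hne.symm, if_true, if_false]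
    rcases ha with rfl | rfl <;> rcases hb with rfl | rfl <;> norm_num
  · right
    refine ⟨⟨i, h⟩, ?_⟩
    rcases h with rfl | rfl <;> simp only [inner_neg_neg, inner_eB, eB_apply, if_true]

theorem sReflB_apply (n : ℕ) {α : EucB n} (h : ⟪α, α⟫ ≠ (0 : ℝ)) (x : EucB n) :
    sReflB n α x = x - (2 / ⟪α, α⟫ * ⟪x, α⟫) • α := by
  have h2 : corootForm n α α = 2 := by
    change ⟪α, (2 / ⟪α, α⟫) • α⟫ = (2 : ℝ)
    rw [real_inner_smul_right]; field_simp
  rw [sReflB, dif_pos h2, Module.reflection_apply]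
  change x - ⟪x, (2 / ⟪α, α⟫) • α⟫ • α = _
  rw [real_inner_smul_right]

theorem sReflB_abs (n : ℕ) {α : EucB n} (hα : α ∈ DeltaB n) (φ : EucB n) :
    ∃ σ : Equiv.Perm (Fin n), ∀ k, |sReflB n α φ k| = |φ (σ k)| := by
  rcases DeltaB_cases n hα with ⟨⟨i, j, hne, a, b, ha, hb, h⟩, hn⟩ | ⟨⟨i, h⟩, hn⟩
  · refine ⟨Equiv.swap i j, fun k => ?_⟩
    rw [sReflB_apply n (by rw [hn]; norm_num), hn, h]
    simp only [inner_add_right, real_inner_smul_right, inner_eB, PiLp.sub_apply, PiLp.smul_apply,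
      PiLp.add_apply, eB_apply, smul_eq_mul]
    by_cases hi : k = i
    · subst hi
      rw [Equiv.swap_apply_left]
      simp only [hne, if_true, if_false]
      rcases ha with rfl | rfl <;> rcases hb with rfl | rfl <;> rw [abs_eq_abs] <;> ring_nf <;> simp
    · by_cases hj : k = j
      · subst hj
        rw [Equiv.swap_apply_right]
        simp only [hne.symm, if_true, if_false]
        rcases ha with rfl | rfl <;> rcases hb with rfl | rfl <;> rw [abs_eq_abs] <;> ring_nf <;> simp
      · rw [Equiv.swap_apply_of_ne_of_ne hi hj]
        simp [hi, hj]
  · refine ⟨1, fun k => ?_⟩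
    rw [sReflB_apply n (by rw [hn]; norm_num), hn]
    by_cases hi : k = i
    · subst hi
      rcases h with rfl | rfl <;> simp [inner_eB, eB_apply] <;> rw [abs_eq_abs] <;> ring_nf <;> simp
    · rcases h with rfl | rfl <;> simp [eB_apply, hi]

theorem regular_iff (n : ℕ) (φ : EucB n) :
    (∀ α ∈ DeltaB n, ⟪φ, α⟫ ≠ 0) ↔
      (∀ i, |φ i| ≠ 0) ∧ ∀ i j, i ≠ j → |φ i| ≠ |φ j| := by
  constructor
  · intro h
    refine ⟨fun i => ?_, ?_⟩
    · have := h (eB n i) (Or.inr ⟨i, Or.inl rfl⟩)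
      rw [inner_eB] at this
      simpa using this
    · have key : ∀ i j, i < j → |φ i| ≠ |φ j| := by
        intro i j hij he
        have h1 := h _ (Or.inl ⟨i, j, hij, Or.inl rfl⟩)
        have h2 := h _ (Or.inl ⟨i, j, hij, Or.inr (Or.inl rfl)⟩)
        rw [inner_add_right, inner_eB, inner_eB] at h1
        rw [inner_sub_right, inner_eB, inner_eB] at h2
        rcases abs_eq_abs.1 he with h | h
        · exact h2 (by linarith)
        · exact h1 (by linarith)
      intro i j hij
      rcases lt_or_gt_of_ne hij with h | h
      · exact key i j h
      · exact (key j i h).symm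
  · rintro ⟨h0, h1⟩ α hα he
    rcases DeltaB_cases n hα with ⟨⟨i, j, hne, a, b, ha, hb, h⟩, -⟩ | ⟨⟨i, h⟩, -⟩
    · rw [h, inner_add_right, real_inner_smul_right, real_inner_smul_right, inner_eB, inner_eB] at he
      apply h1 i j hne
      rw [abs_eq_abs]
      rcases ha with rfl | rfl <;> rcases hb with rfl | rfl
      · right; linarith
      · left; linarith
      · left; linarith
      · right; linarith
    · apply h0 i
      rcases h with rfl | rfl <;> simpa [inner_eB] using he

theorem sReflB_regular (n : ℕ) {α : EucB n} (hα : α ∈ DeltaB n) {φ : EucB n}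
    (h : ∀ α ∈ DeltaB n, ⟪φ, α⟫ ≠ 0) : ∀ β ∈ DeltaB n, ⟪sReflB n α φ, β⟫ ≠ 0 := by
  obtain ⟨σ, hσ⟩ := sReflB_abs n hα φ
  rw [regular_iff] at h ⊢
  simp only [hσ]
  exact ⟨fun i => h.1 _, fun i j hij => h.2 _ _ (fun h => hij (σ.injective h))⟩

/-- The difference of the `ρ_i` is a sum of imaginary roots whose sign changes. -/
theorem rhoI_sub_mem (n : ℕ) (θ : EucB n ≃ₗ[ℝ] EucB n) (φ ψ : EucB n)
    (hφ : ∀ α ∈ DeltaB n, ⟪φ, α⟫ ≠ 0) (hψ : ∀ α ∈ DeltaB n, ⟪ψ, α⟫ ≠ 0)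
    (M : Submodule ℤ (EucB n))
    (hM : ∀ β ∈ DeltaB n, θ β = β → 0 < ⟪β, φ⟫ → ⟪β, ψ⟫ < 0 → β ∈ M) :
    rhoI n θ φ - rhoI n θ ψ ∈ M := by
  classical
  let S : EucB n → Set (EucB n) := fun φ => {α | α ∈ DeltaB n ∧ θ α = α ∧ 0 < ⟪α, φ⟫}
  have hS : ∀ φ, (S φ).Finite := fun φ => (DeltaB_finite n).subset fun x hx => hx.1
  have e1 : ∑ᶠ β ∈ S φ ∩ S ψ, β + ∑ᶠ β ∈ S φ \ S ψ, β = ∑ᶠ β ∈ S φ, β :=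
    finsum_mem_inter_add_sdiff (S ψ) (hS φ)
  have e2 : ∑ᶠ β ∈ S ψ ∩ S φ, β + ∑ᶠ β ∈ S ψ \ S φ, β = ∑ᶠ β ∈ S ψ, β :=
    finsum_mem_inter_add_sdiff (S φ) (hS ψ)
  have aux : ∀ φ ψ : EucB n, (∀ α ∈ DeltaB n, ⟪ψ, α⟫ ≠ 0) → ∀ β ∈ S φ \ S ψ, ⟪β, ψ⟫ < 0 := by
    intro φ ψ hψ β hβ
    have h1 := hψ β hβ.1.1
    rw [real_inner_comm] at h1
    refine lt_of_le_of_ne (not_lt.1 fun h => hβ.2 ⟨hβ.1.1, hβ.1.2.1, h⟩) h1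
  have flip : ∀ φ ψ : EucB n, (∀ α ∈ DeltaB n, ⟪ψ, α⟫ ≠ 0) →
      ∀ β ∈ S φ \ S ψ, -β ∈ S ψ \ S φ := by
    intro φ ψ hψ β hβ
    have h := aux φ ψ hψ β hβ
    refine ⟨⟨DeltaB_neg n hβ.1.1, by rw [map_neg, hβ.1.2.1], by rw [inner_neg_left]; linarith⟩, ?_⟩
    intro h2
    have h3 := h2.2.2
    have h4 := hβ.1.2.2
    rw [inner_neg_left] at h3
    linarith
  have e3 : ∑ᶠ β ∈ S ψ \ S φ, β = -∑ᶠ β ∈ S φ \ S ψ, β := by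
    rw [← finsum_mem_neg_distrib _ ((hS φ).subset Set.sdiff_subset)]
    symm
    refine finsum_mem_eq_of_bijOn (fun x => -x) ⟨flip φ ψ hψ, neg_injective.injOn, ?_⟩ (fun x _ => rfl)
    intro x hx
    exact ⟨-x, flip ψ φ hφ x hx, neg_neg x⟩
  have e4 : rhoI n θ φ - rhoI n θ ψ = ∑ᶠ β ∈ S φ \ S ψ, β := by
    change (1 / 2 : ℝ) • (∑ᶠ β ∈ S φ, β) - (1 / 2 : ℝ) • (∑ᶠ β ∈ S ψ, β) = _
    rw [← e1, ← e2, e3, Set.inter_comm]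
    module
  rw [e4]
  refine finsum_mem_induction (· ∈ M) M.zero_mem (fun _ _ => M.add_mem) ?_
  intro β hβ
  exact hM β hβ.1.1 hβ.1.2.1 hβ.1.2.2 (aux φ ψ hψ β hβ)

theorem long_mem (n : ℕ) {i j : Fin n} (hij : i ≠ j) :
    eB n i + eB n j ∈ Submodule.span ℤ (LongB n) ∧
    eB n i - eB n j ∈ Submodule.span ℤ (LongB n) := by
  have key : ∀ i j : Fin n, i < j → eB n i + eB n j ∈ Submodule.span ℤ (LongB n) ∧
      eB n i - eB n j ∈ Submodule.span ℤ (LongB n) := by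
    intro i j h
    constructor <;> refine Submodule.subset_span ⟨Or.inl ⟨i, j, h, by simp⟩, ?_⟩ <;>
      simp only [inner_add_left, inner_add_right, inner_sub_left, inner_sub_right,
        inner_eB, eB_apply, h.ne, h.ne', if_true, if_false] <;> norm_num
  rcases lt_or_gt_of_ne hij with h | h
  · exact key i j h
  · refine ⟨by rw [add_comm]; exact (key j i h).1, ?_⟩
    rw [← neg_sub]
    exact Submodule.neg_mem _ (key j i h).2

theorem span_mod (n : ℕ) (o : Fin n) {x : EucB n} (hx : x ∈ Submodule.span ℤ (DeltaB n)) :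
    ∃ c : ℤ, x - c • eB n o ∈ Submodule.span ℤ (LongB n) := by
  induction hx using Submodule.span_induction with
  | mem x h =>
    have hd : ∀ i, eB n i - eB n o ∈ Submodule.span ℤ (LongB n) := by
      intro i
      by_cases hi : i = o
      · subst hi; simp
      · exact (long_mem n hi).2
    rcases DeltaB_cases n h with ⟨-, h2⟩ | ⟨⟨i, h1⟩, -⟩
    · exact ⟨0, by rw [zero_smul, sub_zero]; exact Submodule.subset_span ⟨h, h2⟩⟩
    · rcases h1 with rfl | rfl
      · exact ⟨1, by simpa using hd i⟩
      · refine ⟨-1, ?_⟩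
        have := Submodule.neg_mem _ (hd i)
        convert this using 1
        module
  | zero => exact ⟨0, by simp⟩
  | add x y _ _ hx hy =>
    obtain ⟨c, hc⟩ := hx
    obtain ⟨d, hd⟩ := hy
    refine ⟨c + d, ?_⟩
    convert Submodule.add_mem _ hc hd using 1
    module
  | smul a x _ hx =>
    obtain ⟨c, hc⟩ := hx
    refine ⟨a * c, ?_⟩
    convert Submodule.smul_mem _ a hc using 1
    module

/-- Let `θ ∈ W(Bₙ)` be an involution, `φ` regular, and `α` a complex root for `θ`
(`θα ≠ ±α`).  If `α` is short then `ρ_i(φ) − ρ_i(s_α φ)` lies in the `ℤ`-span of the long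
roots; if `α` is long then there are `c ∈ {0, 1}` and a short root `γ` such that
`ρ_i(φ) − ρ_i(s_α φ) − cγ` lies in the `ℤ`-span of the long roots. -/
theorem rho_difference_complex_reflection (n : ℕ) (hn : 0 < n)
    (θ : EucB n ≃ₗ[ℝ] EucB n) (hθW : θ ∈ WeylB n) (hθ2 : θ * θ = 1)
    (φ : EucB n) (hreg : ∀ α ∈ DeltaB n, ⟪φ, α⟫ ≠ 0)
    (α : EucB n) (hα : α ∈ DeltaB n) (hc1 : θ α ≠ α) (hc2 : θ α ≠ -α) :
    (⟪α, α⟫ = (1 : ℝ) →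
      rhoI n θ φ - rhoI n θ (sReflB n α φ) ∈ Submodule.span ℤ (LongB n)) ∧
    (⟪α, α⟫ = (2 : ℝ) →
      ∃ (c : ℤ) (γ : EucB n), (c = 0 ∨ c = 1) ∧ γ ∈ DeltaB n ∧ ⟪γ, γ⟫ = (1 : ℝ) ∧
        rhoI n θ φ - rhoI n θ (sReflB n α φ) - c • γ ∈ Submodule.span ℤ (LongB n)) := by
  have hreg' := sReflB_regular n hα hreg
  constructor
  · intro h1
    refine rhoI_sub_mem n θ φ _ hreg hreg' _ ?_
    intro β hβ hθβ hpos hneg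
    refine Submodule.subset_span ⟨hβ, ?_⟩
    rcases DeltaB_cases n hβ with ⟨-, h2⟩ | ⟨⟨j, hj⟩, -⟩
    · exact h2
    exfalso
    rcases DeltaB_cases n hα with ⟨-, h2⟩ | ⟨⟨i, hi⟩, -⟩
    · rw [h1] at h2; norm_num at h2
    by_cases hij : i = j
    · subst hij
      have hab : α = β ∨ α = -β := by
        rcases hi with rfl | rfl <;> rcases hj with rfl | rfl <;> simp
      rcases hab with rfl | rfl
      · exact hc1 hθβ
      · exact hc1 (by rw [map_neg, hθβ])
    · have h0 : ⟪β, α⟫ = (0 : ℝ) := by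
        rcases hi with rfl | rfl <;> rcases hj with rfl | rfl <;> simp [inner_eB, eB_apply, hij]
      rw [sReflB_apply n (by rw [h1]; norm_num), inner_sub_right, real_inner_smul_right, h0] at hneg
      linarith
  · intro h2
    have hmem : rhoI n θ φ - rhoI n θ (sReflB n α φ) ∈ Submodule.span ℤ (DeltaB n) :=
      rhoI_sub_mem n θ φ _ hreg hreg' _ fun β hβ _ _ _ => Submodule.subset_span hβ
    rcases DeltaB_cases n hα with ⟨⟨i, j, hne, -⟩, -⟩ | ⟨-, h1⟩
    swap
    · rw [h1] at h2; norm_num at h2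
    obtain ⟨c, hc⟩ := span_mod n i hmem
    refine ⟨c % 2, eB n i, Int.emod_two_eq_zero_or_one c, Or.inr ⟨i, Or.inl rfl⟩,
      by rw [inner_eB, eB_apply, if_pos rfl], ?_⟩
    have hl := long_mem n hne
    have h3 := Submodule.add_mem _ hc (Submodule.smul_mem _ (c / 2) (Submodule.add_mem _ hl.1 hl.2))
    convert h3 using 1
    have hcc : c = c % 2 + 2 * (c / 2) := (Int.emod_add_mul_ediv c 2).symm
    generalize c % 2 = r at *
    generalize c / 2 = q at *
    subst hcc
    module
end
end

section
/- Assume n is even and set αᵢ = e_{2i−1} − e_{2i} for 1 ≤ i ≤ n/2 (so αᵢ∨ = αᵢ). Then for every root δ ∈ Δ, the integer ∑_{i=1}^{n/2} ⟪δ, αᵢ∨⟫ is even if δ is long (δ = ±e_k ± e_l, k < l) and odd if δ is short (δ = ±e_k). (This computes the value of the root character of δ on the element z = m̃_{α₁}⋯m̃_{α_{n/2}}: it equals +1 if δ is long and −1 if δ is short.) -/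
open scoped RealInnerProductSpace

noncomputable section

/-- For `n = 2m`, the root `αᵢ = e_{2i−1} − e_{2i}` (1-based), `1 ≤ i ≤ m`. -/
def alphB (m : ℕ) (i : Fin m) : EucB (2 * m) :=
  eB (2 * m) ⟨2 * i.1, by have := i.isLt; omega⟩ -
    eB (2 * m) ⟨2 * i.1 + 1, by have := i.isLt; omega⟩

theorem inner_eB_eB (n : ℕ) (i j : Fin n) : ⟪eB n i, eB n j⟫ = if i = j then (1 : ℝ) else 0 := by
  simp [eB, EuclideanSpace.inner_single_left, Pi.single_apply]

theorem corootB_alphB (m : ℕ) (i : Fin m) : corootB (2 * m) (alphB m i) = alphB m i := by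
  have h : ⟪alphB m i, alphB m i⟫ = (2 : ℝ) := by
    simp only [alphB, inner_sub_left, inner_sub_right, inner_eB_eB]
    norm_num [Fin.ext_iff]
  rw [corootB, h]
  norm_num

theorem sum_eB (m : ℕ) (k : Fin (2 * m)) :
    ∃ c : ℤ, ∑ i : Fin m, ⟪eB (2 * m) k, corootB (2 * m) (alphB m i)⟫ = 2 * (c : ℝ) + 1 := by
  have hk := k.isLt
  have key : ∑ i : Fin m, ⟪eB (2 * m) k, corootB (2 * m) (alphB m i)⟫
      = if k.1 % 2 = 0 then (1 : ℝ) else -1 := by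
    rw [Finset.sum_eq_single (⟨k.1 / 2, by omega⟩ : Fin m)]
    · rw [corootB_alphB]
      simp only [alphB, inner_sub_right, inner_eB_eB, Fin.ext_iff]
      split_ifs <;> first | omega | norm_num
    · intro b _ hb
      rw [corootB_alphB]
      simp only [ne_eq, alphB, inner_sub_right, inner_eB_eB, Fin.ext_iff] at hb ⊢
      split_ifs <;> first | omega | norm_num
    · simp
  rw [key]
  split_ifs
  · exact ⟨0, by norm_num⟩
  · exact ⟨-1, by norm_num⟩

/-- Assume `n = 2m` is even and let `αᵢ = e_{2i−1} − e_{2i}` for `1 ≤ i ≤ m` (so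
`αᵢ∨ = αᵢ`).  For every root `δ ∈ Δ`, the integer `∑_{i=1}^{m} ⟪δ, αᵢ∨⟫` is even if `δ`
is long and odd if `δ` is short. -/
theorem sum_pairing_parity (m : ℕ) (hm : 0 < m)
    (δ : EucB (2 * m)) (hδ : δ ∈ DeltaB (2 * m)) :
    (⟪δ, δ⟫ = (2 : ℝ) →
      ∃ k : ℤ, ∑ i : Fin m, ⟪δ, corootB (2 * m) (alphB m i)⟫ = 2 * k) ∧
    (⟪δ, δ⟫ = (1 : ℝ) →
      ∃ k : ℤ, ∑ i : Fin m, ⟪δ, corootB (2 * m) (alphB m i)⟫ = 2 * k + 1) := by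
  rcases hδ with ⟨i, j, hij, h⟩ | ⟨i, h⟩
  · obtain ⟨a, ha⟩ := sum_eB m i
    obtain ⟨b, hb⟩ := sum_eB m j
    have hne : i ≠ j := hij.ne
    have hne' : j ≠ i := hij.ne'
    constructor
    · intro _
      rcases h with rfl | rfl | rfl | rfl <;>
        simp only [inner_add_left, inner_sub_left, inner_neg_left, Finset.sum_add_distrib,
          Finset.sum_sub_distrib, Finset.sum_neg_distrib, ha, hb]
      · exact ⟨a + b + 1, by push_cast; ring⟩
      · exact ⟨a - b, by push_cast; ring⟩
      · exact ⟨-a + b, by push_cast; ring⟩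
      · exact ⟨-a - b - 1, by push_cast; ring⟩
    · intro h1
      exfalso
      rcases h with rfl | rfl | rfl | rfl <;>
        simp only [inner_add_left, inner_sub_left, inner_neg_left, inner_add_right,
          inner_sub_right, inner_neg_right, inner_eB_eB, hne, hne', if_true, if_false] at h1 <;>
        norm_num at h1
  · obtain ⟨a, ha⟩ := sum_eB m i
    constructor
    · intro h1
      exfalso
      rcases h with rfl | rfl <;>
        simp only [inner_neg_left, inner_neg_right, inner_eB_eB, if_true] at h1 <;>
        norm_num at h1
    · intro _
      rcases h with rfl | rfl <;>
        simp only [inner_neg_left, Finset.sum_neg_distrib, ha]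
      · exact ⟨a, rfl⟩
      · exact ⟨-a - 1, by push_cast; ring⟩
end
end
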